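/- With Δ² := v(τ1)/τ1, one has Δ² = α²·τ/(τ1·(2q+1)), and the integral identity (2ν²/v(τ1)²)·∫_0^{τ1}(v(τ1) − v(s)) ds = (ν²/Δ²)·(τ² + 2qτ0² + τ1²)/(2τ1·τ·(q+1)) holds, where τ = 2qτ0 + τ1; equivalently this quantity equals ν²·(2q+1)·(τ² + 2qτ0² + τ1²)/(2α²·τ²·(q+1)). -/

import Mathlib

open MeasureTheory Real

/-!
Integration by parts turns `∫₀^τ₁ (v(τ₁) - v(s)) ds` into the first moment
`∫₀^τ₁ s φ(s)² ds`, while `v(τ₁)` is the total mass of `φ²`. On `[0, τ₁]`, `φ² / α²` is a profile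
which equals `1` up to `τ₀` and then decays to `0` like a power with exponent `p = 2q`. Its mass is
`(p τ₀ + τ₁) / (p + 1)`, which is where `τ = p τ₀ + τ₁` comes from, and its first moment is
`(τ² + p τ₀² + τ₁²) / (2 (p + 1) (p + 2))`. Both are finite as soon as `-1 < p`,
that is `-1 / 2 < q`.
-/

theorem integral_sub_primitive_eq_integral_sub_mul {f : ℝ → ℝ} {a b : ℝ}
    (hf : IntervalIntegrable f volume a b) :
    ∫ s in a..b, ((∫ t in a..b, f t) - ∫ t in a..s, f t) = ∫ s in a..b, (s - a) * f s := by
  set F : ℝ → ℝ := fun s => ∫ t in a..s, f t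
  have hF : AbsolutelyContinuousOnInterval F a b :=
    hf.absolutelyContinuousOnInterval_intervalIntegral Set.left_mem_uIcc
  have hsub : AbsolutelyContinuousOnInterval (fun s => s - a) a b :=
    ContDiffOn.absolutelyContinuousOnInterval (by fun_prop)
  have hderiv : ∫ s in a..b, (s - a) * f s = ∫ s in a..b, (s - a) * deriv F s := by
    refine intervalIntegral.integral_congr_ae ?_
    filter_upwards [hf.ae_hasDerivAt_integral] with s hs hmem
    rw [(hs (Set.uIoc_subset_uIcc hmem) a Set.left_mem_uIcc).deriv]
  have hparts := hsub.integral_mul_deriv_eq_deriv_mul hF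
  simp only [deriv_sub_const, deriv_id'', one_mul, sub_self, zero_mul, sub_zero] at hparts
  rw [hderiv, hparts, intervalIntegral.integral_sub intervalIntegrable_const
    hF.continuousOn.intervalIntegrable, intervalIntegral.integral_const, smul_eq_mul]

section PowerDecay

variable {a b p : ℝ}

theorem intervalIntegrable_sub_div_rpow (hp : -1 < p) :
    IntervalIntegrable (fun t => ((b - t) / (b - a)) ^ p) volume a b := by
  rcases eq_or_ne a b with rfl | hab
  · exact .refl
  have hL : b - a ≠ 0 := sub_ne_zero.2 hab.symm
  have hpow : IntervalIntegrable (fun x : ℝ => x ^ p) volume 1 0 :=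
    intervalIntegral.intervalIntegrable_rpow' hp
  simpa [hL, div_eq_mul_inv] using
    (hpow.comp_mul_right (c := (b - a)⁻¹)).comp_sub_left b

theorem integral_comp_sub_div_sub {E : Type*} [NormedAddCommGroup E] [NormedSpace ℝ E]
    (f : ℝ → E) :
    ∫ t in a..b, f ((b - t) / (b - a)) = (b - a) • ∫ x in (0 : ℝ)..1, f x := by
  rcases eq_or_ne a b with rfl | hab
  · simp
  have hL : b - a ≠ 0 := sub_ne_zero.2 hab.symm
  simp only [sub_div b _ (b - a)]
  rw [intervalIntegral.integral_comp_sub_div f hL, sub_self, ← sub_div, div_self hL]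

theorem integral_sub_div_rpow (hp : -1 < p) :
    ∫ t in a..b, ((b - t) / (b - a)) ^ p = (b - a) / (p + 1) := by
  rw [integral_comp_sub_div_sub (fun x => x ^ p), integral_rpow (Or.inl hp), one_rpow,
    zero_rpow (by linarith), sub_zero, smul_eq_mul, mul_one_div]

theorem integral_mul_sub_div_rpow (hp : -1 < p) :
    ∫ t in a..b, t * ((b - t) / (b - a)) ^ p =
      (b - a) * (b + (p + 1) * a) / ((p + 1) * (p + 2)) := by
  rcases eq_or_ne a b with rfl | hab
  · simp
  have hL : b - a ≠ 0 := sub_ne_zero.2 hab.symm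
  have hp1 : p + 1 ≠ 0 := by linarith
  have hp2 : p + 2 ≠ 0 := by linarith
  have hsubst : ∀ t, t = b - (b - a) * ((b - t) / (b - a)) := fun t => by field_simp; ring
  have hexpand : Set.EqOn (fun x : ℝ => (b - (b - a) * x) * x ^ p)
      (fun x => b * x ^ p - (b - a) * x ^ (p + 1)) (Set.uIcc 0 1) := fun x hx => by
    have hx0 : 0 ≤ x := (Set.uIcc_of_le (zero_le_one' ℝ) ▸ hx).1
    simp only [rpow_add_one' hx0 hp1]
    ring
  calc ∫ t in a..b, t * ((b - t) / (b - a)) ^ p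
      = ∫ t in a..b, (b - (b - a) * ((b - t) / (b - a))) * ((b - t) / (b - a)) ^ p := by
        simp only [← hsubst]
    _ = (b - a) * ∫ x in (0 : ℝ)..1, (b * x ^ p - (b - a) * x ^ (p + 1)) := by
        rw [integral_comp_sub_div_sub (fun x => (b - (b - a) * x) * x ^ p),
          intervalIntegral.integral_congr hexpand, smul_eq_mul]
    _ = (b - a) * (b / (p + 1) - (b - a) / (p + 2)) := by
        have hp' : -1 < p + 1 := by linarith
        rw [intervalIntegral.integral_sub
            ((intervalIntegral.intervalIntegrable_rpow' hp).const_mul b)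
            ((intervalIntegral.intervalIntegrable_rpow' hp').const_mul (b - a)),
          intervalIntegral.integral_const_mul, intervalIntegral.integral_const_mul,
          integral_rpow (Or.inl hp), integral_rpow (Or.inl hp'), add_assoc p, one_add_one_eq_two,
          one_rpow, one_rpow, zero_rpow hp1, zero_rpow hp2, sub_zero, mul_one_div, mul_one_div]
    _ = (b - a) * (b + (p + 1) * a) / ((p + 1) * (p + 2)) := by
        field_simp
        ring

end PowerDecay

/-- The normalized effective-medium volatility profile, for `a < b`: it equals `1` up to time `a`
and decays like `((b - t) / (b - a)) ^ p` from `a` to `b`. The minimum encodes both regimes in one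
formula. For negative `p` the value at `b` is the junk value `0 ^ p = 0` (a null set). -/
noncomputable def plateauDecay (a b p t : ℝ) : ℝ := min 1 ((b - t) / (b - a)) ^ p

namespace plateauDecay

variable {a b p t : ℝ}

theorem eq_one (hab : a < b) (ht : t ≤ a) : plateauDecay a b p t = 1 := by
  have hle : 1 ≤ (b - t) / (b - a) := (one_le_div (sub_pos.2 hab)).2 (by linarith)
  rw [plateauDecay, min_eq_left hle, one_rpow]

theorem eq_rpow (hab : a < b) (ht : a ≤ t) :
    plateauDecay a b p t = ((b - t) / (b - a)) ^ p := by
  have hle : (b - t) / (b - a) ≤ 1 := (div_le_one (sub_pos.2 hab)).2 (by linarith)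
  rw [plateauDecay, min_eq_right hle]

theorem sq (hab : a < b) (ht : t ≤ b) :
    plateauDecay a b p t ^ 2 = plateauDecay a b (2 * p) t := by
  have hbase : 0 ≤ min 1 ((b - t) / (b - a)) :=
    le_min zero_le_one (div_nonneg (sub_nonneg.2 ht) (sub_pos.2 hab).le)
  rw [plateauDecay, plateauDecay, mul_comm, rpow_mul hbase, rpow_two]

theorem eqOn_one (ha : 0 ≤ a) (hab : a < b) :
    Set.EqOn (plateauDecay a b p) (fun _ => 1) (Set.uIcc 0 a) := fun _ ht =>
  eq_one hab (Set.uIcc_of_le ha ▸ ht).2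

theorem eqOn_rpow (hab : a < b) :
    Set.EqOn (plateauDecay a b p) (fun t => ((b - t) / (b - a)) ^ p) (Set.uIcc a b) := fun _ ht =>
  eq_rpow hab (Set.uIcc_of_le hab.le ▸ ht).1

theorem intervalIntegrable_plateau (ha : 0 ≤ a) (hab : a < b) :
    IntervalIntegrable (plateauDecay a b p) volume 0 a :=
  intervalIntegrable_const.congr ((eqOn_one ha hab).symm.mono Set.uIoc_subset_uIcc)

theorem intervalIntegrable_decay (hab : a < b) (hp : -1 < p) :
    IntervalIntegrable (plateauDecay a b p) volume a b :=
  (intervalIntegrable_sub_div_rpow hp).congr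
    ((eqOn_rpow hab).symm.mono Set.uIoc_subset_uIcc)

theorem intervalIntegrable (ha : 0 ≤ a) (hab : a < b) (hp : -1 < p) :
    IntervalIntegrable (plateauDecay a b p) volume 0 b :=
  (intervalIntegrable_plateau ha hab).trans (intervalIntegrable_decay hab hp)

theorem integral_eq (ha : 0 ≤ a) (hab : a < b) (hp : -1 < p) :
    ∫ t in (0 : ℝ)..b, plateauDecay a b p t = (p * a + b) / (p + 1) := by
  have hp1 : p + 1 ≠ 0 := by linarith
  rw [← intervalIntegral.integral_add_adjacent_intervals (intervalIntegrable_plateau ha hab)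
      (intervalIntegrable_decay hab hp),
    intervalIntegral.integral_congr (eqOn_one ha hab),
    intervalIntegral.integral_congr (eqOn_rpow hab), integral_sub_div_rpow hp,
    integral_one]
  field_simp
  ring

theorem integral_mul_eq (ha : 0 ≤ a) (hab : a < b) (hp : -1 < p) :
    ∫ t in (0 : ℝ)..b, t * plateauDecay a b p t =
      ((p * a + b) ^ 2 + p * a ^ 2 + b ^ 2) / (2 * (p + 1) * (p + 2)) := by
  have hp1 : p + 1 ≠ 0 := by linarith
  have hp2 : p + 2 ≠ 0 := by linarith
  have hplateau : ∫ t in (0 : ℝ)..a, t * plateauDecay a b p t = a ^ 2 / 2 := by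
    rw [intervalIntegral.integral_congr (g := fun t => t) fun t ht => by
      simp only [eqOn_one ha hab ht, mul_one], integral_id]
    ring
  have hdecay : ∫ t in a..b, t * plateauDecay a b p t =
      (b - a) * (b + (p + 1) * a) / ((p + 1) * (p + 2)) := by
    rw [← integral_mul_sub_div_rpow hp]
    exact intervalIntegral.integral_congr fun t ht => by simp only [eqOn_rpow hab ht]
  rw [← intervalIntegral.integral_add_adjacent_intervals
      ((intervalIntegrable_plateau ha hab).continuousOn_mul (continuousOn_id' _))
      ((intervalIntegrable_decay hab hp).continuousOn_mul (continuousOn_id' _)),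
    hplateau, hdecay]
  field_simp
  ring

end plateauDecay

theorem sq_eqOn_plateauDecay {τ0 τ1 q α : ℝ} {φ : ℝ → ℝ} (hτ0 : 0 ≤ τ0) (hτ01 : τ0 < τ1)
    (hφ1 : ∀ t ∈ Set.Icc (0 : ℝ) τ0, φ t = α)
    (hφ2 : ∀ t ∈ Set.Icc τ0 τ1, φ t = α * ((τ1 - t) / (τ1 - τ0)) ^ q) :
    Set.EqOn (fun t => φ t ^ 2) (fun t => α ^ 2 * plateauDecay τ0 τ1 (2 * q) t)
      (Set.uIcc 0 τ1) := fun t ht => by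
  rw [Set.uIcc_of_le (hτ0.trans hτ01.le)] at ht
  have hφ : φ t = α * plateauDecay τ0 τ1 q t := by
    rcases le_total t τ0 with hle | hle
    · rw [hφ1 t ⟨ht.1, hle⟩, plateauDecay.eq_one hτ01 hle, mul_one]
    · rw [hφ2 t ⟨hle, ht.2⟩, plateauDecay.eq_rpow hτ01 hle]
  simp only [hφ, mul_pow, plateauDecay.sq hτ01 ht.2]

theorem stmt_10_general {τ0 τ1 q α τ : ℝ} (ν : ℝ)
    (hτ0 : 0 ≤ τ0) (hτ01 : τ0 < τ1) (hq : -1 / 2 < q) (hα : α ≠ 0)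
    (hτ : τ = 2 * q * τ0 + τ1) {φ v : ℝ → ℝ}
    (hφ1 : ∀ t ∈ Set.Icc (0 : ℝ) τ0, φ t = α)
    (hφ2 : ∀ t ∈ Set.Icc τ0 τ1, φ t = α * ((τ1 - t) / (τ1 - τ0)) ^ q)
    (hv : ∀ u, v u = ∫ s in (0 : ℝ)..u, (φ s) ^ 2) :
    v τ1 / τ1 = α ^ 2 * τ / (τ1 * (2 * q + 1))
    ∧ 2 * ν ^ 2 / (v τ1) ^ 2 * (∫ s in (0 : ℝ)..τ1, (v τ1 - v s))
        = ν ^ 2 / (v τ1 / τ1) * (τ ^ 2 + 2 * q * τ0 ^ 2 + τ1 ^ 2)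
            / (2 * τ1 * τ * (q + 1))
    ∧ 2 * ν ^ 2 / (v τ1) ^ 2 * (∫ s in (0 : ℝ)..τ1, (v τ1 - v s))
        = ν ^ 2 * (2 * q + 1) * (τ ^ 2 + 2 * q * τ0 ^ 2 + τ1 ^ 2)
            / (2 * α ^ 2 * τ ^ 2 * (q + 1)) := by
  have hp : -1 < 2 * q := by linarith
  have hτ1 : τ1 ≠ 0 := (hτ0.trans_lt hτ01).ne'
  have hτpos : 0 < τ := by nlinarith
  have hq1 : q + 1 ≠ 0 := by linarith
  have h2q1 : 2 * q + 1 ≠ 0 := by linarith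
  have hsq := sq_eqOn_plateauDecay hτ0 hτ01 hφ1 hφ2
  have hint : IntervalIntegrable (fun t => φ t ^ 2) volume 0 τ1 :=
    ((plateauDecay.intervalIntegrable hτ0 hτ01 hp).const_mul (α ^ 2)).congr
      (hsq.symm.mono Set.uIoc_subset_uIcc)
  have hmass : v τ1 = α ^ 2 * (τ / (2 * q + 1)) := by
    rw [hv, intervalIntegral.integral_congr hsq, intervalIntegral.integral_const_mul,
      plateauDecay.integral_eq hτ0 hτ01 hp, hτ]
  have hmoment : ∫ s in (0 : ℝ)..τ1, (v τ1 - v s) =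
      α ^ 2 * ((τ ^ 2 + 2 * q * τ0 ^ 2 + τ1 ^ 2) / (2 * (2 * q + 1) * (2 * q + 2))) := by
    simp only [hv, integral_sub_primitive_eq_integral_sub_mul hint, sub_zero]
    rw [hτ, ← plateauDecay.integral_mul_eq hτ0 hτ01 hp, ← intervalIntegral.integral_const_mul]
    refine intervalIntegral.integral_congr fun s hs => ?_
    simp only [hsq hs, mul_left_comm]
  rw [hmoment, hmass, show 2 * q + 2 = 2 * (q + 1) by ring]
  refine ⟨?_, ?_, ?_⟩ <;> field_simp

/-- Effective-medium quantities Δ² = v(τ1)/τ1 and the G-integral for the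
backward-looking SABR model with τ0 ≥ 0, where τ = 2qτ0 + τ1. -/
theorem stmt_10 (τ0 τ1 q α ν ρ τ : ℝ)
    (hτ0 : 0 ≤ τ0) (hτ01 : τ0 < τ1) (hq : 0 < q) (hα : 0 < α) (hν : 0 < ν)
    (hρ : ρ ∈ Set.Icc (-1 : ℝ) 1)
    (hτ : τ = 2 * q * τ0 + τ1)
    (φ v : ℝ → ℝ)
    (hφ1 : ∀ t ∈ Set.Icc (0 : ℝ) τ0, φ t = α)
    (hφ2 : ∀ t ∈ Set.Icc τ0 τ1, φ t = α * ((τ1 - t) / (τ1 - τ0)) ^ q)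
    (hv : ∀ u, v u = ∫ s in (0:ℝ)..u, (φ s) ^ 2) :
    v τ1 / τ1 = α ^ 2 * τ / (τ1 * (2 * q + 1))
    ∧ 2 * ν ^ 2 / (v τ1) ^ 2 * (∫ s in (0:ℝ)..τ1, (v τ1 - v s))
        = ν ^ 2 / (v τ1 / τ1) * (τ ^ 2 + 2 * q * τ0 ^ 2 + τ1 ^ 2)
            / (2 * τ1 * τ * (q + 1))
    ∧ 2 * ν ^ 2 / (v τ1) ^ 2 * (∫ s in (0:ℝ)..τ1, (v τ1 - v s))
        = ν ^ 2 * (2 * q + 1) * (τ ^ 2 + 2 * q * τ0 ^ 2 + τ1 ^ 2)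
            / (2 * α ^ 2 * τ ^ 2 * (q + 1)) :=
  stmt_10_general ν hτ0 hτ01 (by linarith) hα.ne' hτ hφ1 hφ2 hv
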